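/- Let W be a finite reflection group with root system Φ, a a generic point, Φ⁺ = {α ∈ Φ : ⟨a,α⟩ > 0}, and Δ a simple system for Φ⁺. For I ⊆ Δ let W_I be the subgroup of W generated by {s_α : α ∈ I} and F_I = conv{u(a) : u ∈ W_I}. Then F_I equals the intersection of the permutahedron with the affine subspace through a directed by span_ℝ(I): F_I = conv{w(a) : w ∈ W} ∩ (a + span_ℝ(I)). -/

import Mathlib

/-!
The face `F_I` is cut out of the permutahedron by a supporting hyperplane. Two facts about the
orbit of `a` carry the proof.

* Every `w ∈ W` satisfies `a - w a ∈ cone(Δ)` (`sub_apply_mem_cone`). Since `W` is generated by the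
  simple reflections (`genSubgroup_simple_eq`), `w` is a product of them, and one inducts on the
  length of the word. Writing `w = w' s_α`, one has `a - w a = (a - w' a) + c • w' α` with `c > 0`;
  this is in the cone if `w' α` is positive, and otherwise the exchange property
  (`exists_shorter_word`) gives a shorter word for `w`.
* If moreover `w a - a ∈ span I`, then `w a` lies in the `W_I`-orbit of `a`
  (`mem_orbitSet_of_sub_mem_span`). Among the points of the `W_I`-orbit of `w a` take the point `y`
  maximizing `⟪a, y⟫`. It satisfies `⟪y, α⟫ ≥ 0` for `α ∈ I`, and `z = a - y` is in `cone(I)`, so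
  `⟪y, z⟫ ≥ 0`; with `‖y + z‖ = ‖y‖` this forces `z = 0`.

Linear independence of `Δ` gives a linear functional `f` vanishing on `I` and equal to `1` on
`Δ \ I`. It is nonnegative on `cone(Δ)` and vanishes there only on `cone(I)`. Hence `f ≤ f a` on the
permutahedron, and equality on a convex combination of orbit points forces equality at all points of
positive weight, all of which are then in the `W_I`-orbit of `a`. The same functional, for a single
simple root, shows that a simple reflection permutes the other positive roots.
-/

open scoped RealInnerProductSpace

variable {V : Type*} [NormedAddCommGroup V] [InnerProductSpace ℝ V]

/-- `s` acts as the orthogonal reflection along the nonzero vector `α`: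
`s v = v - 2 (⟪v,α⟫/⟪α,α⟫) α`. -/
def IsReflAlong (s : V ≃ₗᵢ[ℝ] V) (α : V) : Prop :=
  α ≠ 0 ∧ ∀ v : V, s v = v - ((2 * ⟪v, α⟫ / ⟪α, α⟫) • α)

/-- `s` is a reflection. -/
def IsReflection (s : V ≃ₗᵢ[ℝ] V) : Prop :=
  ∃ α : V, IsReflAlong s α

/-- A reflection group: a subgroup of the group of linear isometries of `V` generated by
the reflections it contains. -/
def IsReflectionGroup (W : Subgroup (V ≃ₗᵢ[ℝ] V)) : Prop :=
  W = Subgroup.closure {s | IsReflection s ∧ s ∈ W}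

/-- `a` is a generic point for `W`: it is fixed by no reflection belonging to `W`. -/
def IsGeneric (W : Subgroup (V ≃ₗᵢ[ℝ] V)) (a : V) : Prop :=
  ∀ s ∈ W, IsReflection s → s a ≠ a

/-- The `W`-orbit of the point `a`. -/
def orbitSet (W : Subgroup (V ≃ₗᵢ[ℝ] V)) (a : V) : Set V :=
  {x | ∃ w ∈ W, x = w a}

/-- The permutahedron `Perm^a(W)`: the convex hull of the `W`-orbit of `a`. -/
noncomputable def permutahedron (W : Subgroup (V ≃ₗᵢ[ℝ] V)) (a : V) : Set V :=
  convexHull ℝ (orbitSet W a)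

/-- A root system for `W`. -/
structure IsRootSystem (W : Subgroup (V ≃ₗᵢ[ℝ] V)) (Φ : Set V) : Prop where
  finite : Φ.Finite
  nonempty : Φ.Nonempty
  ne_zero : ∀ α ∈ Φ, α ≠ 0
  gen : W = Subgroup.closure {s | ∃ α ∈ Φ, IsReflAlong s α}
  line : ∀ α ∈ Φ, {β ∈ Φ | ∃ t : ℝ, β = t • α} = {α, -α}
  stable : ∀ w ∈ W, (⇑w) '' Φ = Φ

/-- The positive system determined by the generic point `a`: roots `α` with `⟪a, α⟫ > 0`. -/
def posSystem (a : V) (Φ : Set V) : Set V :=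
  {α ∈ Φ | 0 < ⟪a, α⟫}

/-- `Δ` is a simple system for the positive system `Φp`: `Δ ⊆ Φp` is linearly independent and
every element of `Φp` is a linear combination of `Δ` with nonnegative coefficients. -/
def IsSimpleSystem (Φp Δ : Set V) : Prop :=
  Δ ⊆ Φp ∧ LinearIndependent ℝ ((↑) : Δ → V) ∧
    ∀ β ∈ Φp, ∃ c : V →₀ ℝ, (c.support : Set V) ⊆ Δ ∧ (∀ v : V, 0 ≤ c v) ∧
      β = c.sum fun v r => r • v

/-- The subgroup generated by the reflections along the vectors of `I`. -/
def genSubgroup (I : Set V) : Subgroup (V ≃ₗᵢ[ℝ] V) :=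
  Subgroup.closure {s | ∃ β ∈ I, IsReflAlong s β}

/-! ### Reflections -/

/-- The orthogonal reflection along `α`, i.e. in the hyperplane orthogonal to `α`
(the identity if `α = 0`). -/
noncomputable def rootRefl (α : V) : V ≃ₗᵢ[ℝ] V := (Submodule.span ℝ {α})ᗮ.reflection

lemma rootRefl_apply (α v : V) : rootRefl α v = v - (2 * ⟪v, α⟫ / ⟪α, α⟫) • α := by
  unfold rootRefl
  rw [Submodule.reflection_orthogonal_apply, Submodule.reflection_singleton_apply, neg_sub,
    real_inner_comm, real_inner_self_eq_norm_sq, two_smul, ← add_smul, ← add_div, ← two_mul]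
  rfl

lemma isReflAlong_refl {α : V} (h : α ≠ 0) : IsReflAlong (rootRefl α) α := ⟨h, rootRefl_apply α⟩

lemma IsReflAlong.eq_refl {s : V ≃ₗᵢ[ℝ] V} {α : V} (h : IsReflAlong s α) : s = rootRefl α := by
  ext v
  rw [h.2, rootRefl_apply]

lemma rootRefl_self (α : V) : rootRefl α α = -α :=
  Submodule.reflection_orthogonalComplement_singleton_eq_neg α

lemma rootRefl_mul_self (α : V) : rootRefl α * rootRefl α = 1 := Submodule.reflection_mul_reflection _

lemma rootRefl_inv (α : V) : (rootRefl α)⁻¹ = rootRefl α := Submodule.reflection_inv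

lemma rootRefl_neg (α : V) : rootRefl (-α) = rootRefl α := by
  ext v
  simp [rootRefl_apply, neg_div]

lemma rootRefl_map (u : V ≃ₗᵢ[ℝ] V) (α : V) : rootRefl (u α) = u * rootRefl α * u⁻¹ := by
  ext v
  obtain ⟨x, rfl⟩ := u.surjective v
  simp [rootRefl_apply]

lemma rootRefl_mem_genSubgroup {I : Set V} {α : V} (h : α ∈ I) (h0 : α ≠ 0) :
    rootRefl α ∈ genSubgroup I :=
  Subgroup.subset_closure ⟨α, h, isReflAlong_refl h0⟩

lemma inner_self_pos {α : V} (h : α ≠ 0) : (0 : ℝ) < ⟪α, α⟫ := real_inner_self_pos.2 h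

/-! ### The cone spanned by the simple roots -/

lemma smul_mem_hull {S : Set V} {x : V} (hx : x ∈ PointedCone.hull ℝ S) {c : ℝ} (hc : 0 ≤ c) :
    c • x ∈ PointedCone.hull ℝ S :=
  Submodule.smul_mem (PointedCone.hull ℝ S) (⟨c, hc⟩ : {r : ℝ // 0 ≤ r}) hx

lemma IsSimpleSystem.mem_hull {P Δ : Set V} (h : IsSimpleSystem P Δ) {β : V} (hβ : β ∈ P) :
    β ∈ PointedCone.hull ℝ Δ := by
  obtain ⟨c, hc, h0, rfl⟩ := h.2.2 β hβ
  exact Submodule.sum_mem _ fun v hv =>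
    smul_mem_hull (Submodule.subset_span (hc hv)) (h0 v)

lemma inner_nonneg_of_mem_hull {S : Set V} {y x : V} (hy : ∀ α ∈ S, (0 : ℝ) ≤ ⟪y, α⟫)
    (hx : x ∈ PointedCone.hull ℝ S) : (0 : ℝ) ≤ ⟪y, x⟫ := by
  induction hx using Submodule.span_induction with
  | mem x h => exact hy x h
  | zero => simp
  | add x z _ _ h1 h2 => rw [inner_add_right]; exact add_nonneg h1 h2
  | smul c x _ h =>
    rw [show c • x = (c : ℝ) • x from rfl, real_inner_smul_right]
    exact mul_nonneg c.2 h

/-- The supporting functional of the face `cone(J)` of the simplicial cone `cone(Δ)`. -/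
lemma exists_supporting {Δ : Set V} (h : LinearIndependent ℝ ((↑) : Δ → V)) (J : Set V)
    (hJ : J ⊆ Δ) :
    ∃ f : V →ₗ[ℝ] ℝ, (∀ x ∈ Submodule.span ℝ J, f x = 0) ∧
      ∀ x ∈ PointedCone.hull ℝ Δ, 0 ≤ f x ∧ (f x = 0 → x ∈ PointedCone.hull ℝ J) := by
  classical
  have hli : LinearIndepOn ℝ id Δ := h
  let b := Module.Basis.extend hli
  let f : V →ₗ[ℝ] ℝ := b.constr ℝ fun i => if (i : V) ∈ J then (0 : ℝ) else 1
  have hf : ∀ α ∈ Δ, f α = if α ∈ J then (0 : ℝ) else 1 := by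
    intro α hα
    have h1 : α ∈ hli.extend (Set.subset_univ _) := hli.subset_extend _ hα
    have h2 : b ⟨α, h1⟩ = α := Module.Basis.extend_apply_self hli ⟨α, h1⟩
    have h3 := b.constr_basis ℝ (fun i => if (i : V) ∈ J then (0 : ℝ) else 1) ⟨α, h1⟩
    rwa [h2] at h3
  refine ⟨f, fun x hx => ?_, fun x hx => ?_⟩
  · induction hx using Submodule.span_induction with
    | mem x h => rw [hf x (hJ h), if_pos h]
    | zero => simp
    | add x z _ _ h1 h2 => simp [h1, h2]
    | smul c x _ h => simp [h]
  · induction hx using Submodule.span_induction with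
    | mem x h =>
      rw [hf x h]
      by_cases hx : x ∈ J
      · simpa [hx] using Submodule.subset_span hx
      · simp [hx]
    | zero => simp
    | add x z _ _ h1 h2 =>
      rw [map_add]
      refine ⟨add_nonneg h1.1 h2.1, fun h0 => add_mem (h1.2 ?_) (h2.2 ?_)⟩ <;>
        linarith [h1.1, h2.1]
    | smul c x _ h =>
      have : f (c • x) = (c : ℝ) * f x := by
        rw [show c • x = (c : ℝ) • x from rfl, map_smul, smul_eq_mul]
      rw [this]
      refine ⟨mul_nonneg c.2 h.1, fun h0 => ?_⟩
      rcases mul_eq_zero.1 h0 with h0 | h0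
      · have : c = 0 := Subtype.ext h0
        simp [this]
      · exact Submodule.smul_mem _ _ (h.2 h0)

/-! ### Positive roots -/

section

variable {W : Subgroup (V ≃ₗᵢ[ℝ] V)} {Φ : Set V} {a : V} {Δ : Set V}

lemma IsRootSystem.refl_mem (hΦ : IsRootSystem W Φ) {α : V} (h : α ∈ Φ) : rootRefl α ∈ W := by
  rw [hΦ.gen]
  exact Subgroup.subset_closure ⟨α, h, isReflAlong_refl (hΦ.ne_zero α h)⟩

lemma IsRootSystem.map_mem (hΦ : IsRootSystem W Φ) {w : V ≃ₗᵢ[ℝ] V} (hw : w ∈ W) {α : V}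
    (h : α ∈ Φ) : w α ∈ Φ := by
  rw [← hΦ.stable w hw]
  exact ⟨α, h, rfl⟩

lemma IsRootSystem.neg_mem (hΦ : IsRootSystem W Φ) {α : V} (h : α ∈ Φ) : -α ∈ Φ :=
  rootRefl_self α ▸ hΦ.map_mem (hΦ.refl_mem h) h

lemma pos_or_neg (hΦ : IsRootSystem W Φ) (ha : IsGeneric W a) {β : V} (h : β ∈ Φ) :
    β ∈ posSystem a Φ ∨ -β ∈ posSystem a Φ := by
  have h0 : (⟪a, β⟫ : ℝ) ≠ 0 := by
    intro h0
    refine ha _ (hΦ.refl_mem h) ⟨β, isReflAlong_refl (hΦ.ne_zero β h)⟩ ?_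
    simp [rootRefl_apply, h0]
  rcases lt_or_gt_of_ne h0 with h1 | h1
  · exact Or.inr ⟨hΦ.neg_mem h, by rw [inner_neg_right]; linarith⟩
  · exact Or.inl ⟨h, h1⟩

/-- The reflection along the simple root `α` permutes the positive roots other than `α`. -/
lemma rootRefl_pos (hΦ : IsRootSystem W Φ) (ha : IsGeneric W a)
    (hΔ : IsSimpleSystem (posSystem a Φ) Δ) {α γ : V} (hα : α ∈ Δ)
    (hγ : γ ∈ posSystem a Φ) (hne : γ ≠ α) : rootRefl α γ ∈ posSystem a Φ := by
  have hαp := hΔ.1 hα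
  refine (pos_or_neg hΦ ha (hΦ.map_mem (hΦ.refl_mem hαp.1) hγ.1)).resolve_right fun hneg => ?_
  obtain ⟨f, hf0, hf⟩ := exists_supporting hΔ.2.1 {α} (by simpa using hα)
  have hfα : f α = 0 := hf0 α (Submodule.mem_span_singleton_self α)
  have h1 := hf γ (hΔ.mem_hull hγ)
  have h2 := (hf _ (hΔ.mem_hull hneg)).1
  rw [map_neg, rootRefl_apply, map_sub, map_smul, hfα] at h2
  simp only [smul_zero, sub_zero] at h2
  have h3 := PointedCone.hull_le_span (R := ℝ) _ (h1.2 (by linarith [h1.1]))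
  obtain ⟨t, ht⟩ := Submodule.mem_span_singleton.1 h3
  have h4 : γ ∈ ({α, -α} : Set V) := by
    rw [← hΦ.line α hαp.1]
    exact ⟨hγ.1, t, ht.symm⟩
  rcases h4 with h4 | h4
  · exact hne h4
  · have := hγ.2
    rw [h4, inner_neg_right] at this
    linarith [hαp.2]

lemma genSubgroup_le (hΦ : IsRootSystem W Φ) {I : Set V} (hI : I ⊆ Φ) : genSubgroup I ≤ W := by
  rw [genSubgroup, Subgroup.closure_le]
  rintro s ⟨β, hβ, hs⟩
  rw [hs.eq_refl]
  exact hΦ.refl_mem (hI hβ)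

/-- Every positive root is in the `W_Δ`-orbit of a simple root, namely of an element of its
`W_Δ`-orbit which is minimal for `⟪a, ·⟫` among the positive roots there. -/
lemma exists_map_simple (hΦ : IsRootSystem W Φ) (ha : IsGeneric W a)
    (hΔ : IsSimpleSystem (posSystem a Φ) Δ) {β : V} (hβ : β ∈ posSystem a Φ) :
    ∃ u ∈ genSubgroup Δ, ∃ α ∈ Δ, u β = α := by
  obtain ⟨γ, ⟨hγ, u, hu, huγ⟩, hmin⟩ := Set.exists_min_image
    {γ | γ ∈ posSystem a Φ ∧ ∃ u ∈ genSubgroup Δ, u β = γ} (fun γ => (⟪a, γ⟫ : ℝ))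
    (hΦ.finite.subset fun γ h => h.1.1) ⟨β, hβ, 1, one_mem _, rfl⟩
  refine ⟨u, hu, γ, ?_, huγ⟩
  by_contra hγΔ
  have hγ0 := inner_self_pos (hΦ.ne_zero γ hγ.1)
  obtain ⟨α, hα, hpos⟩ : ∃ α ∈ Δ, (0 : ℝ) < ⟪γ, α⟫ := by
    by_contra! hcon
    have := inner_nonneg_of_mem_hull (S := Δ) (y := -γ) (x := γ)
      (fun α h => by rw [inner_neg_left]; linarith [hcon α h]) (hΔ.mem_hull hγ)
    rw [inner_neg_left] at this
    linarith
  have hαp := hΔ.1 hα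
  have hα0 := hΦ.ne_zero α hαp.1
  have h1 := rootRefl_pos hΦ ha hΔ hα hγ (fun h => hγΔ (h ▸ hα))
  have h2 := hmin (rootRefl α γ) ⟨h1, rootRefl α * u,
    mul_mem (rootRefl_mem_genSubgroup hα hα0) hu, by simp [huγ]⟩
  simp only [rootRefl_apply, inner_sub_right, real_inner_smul_right] at h2
  have h3 : (0 : ℝ) < 2 * ⟪γ, α⟫ / ⟪α, α⟫ * ⟪a, α⟫ :=
    mul_pos (div_pos (by linarith) (inner_self_pos hα0)) hαp.2
  linarith

lemma genSubgroup_simple_eq (hΦ : IsRootSystem W Φ) (ha : IsGeneric W a)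
    (hΔ : IsSimpleSystem (posSystem a Φ) Δ) : genSubgroup Δ = W := by
  refine le_antisymm (genSubgroup_le hΦ fun α h => (hΔ.1 h).1) ?_
  have key : ∀ β ∈ posSystem a Φ, rootRefl β ∈ genSubgroup Δ := by
    intro β hβ
    obtain ⟨u, hu, α, hα, h⟩ := exists_map_simple hΦ ha hΔ hβ
    have h1 := rootRefl_mem_genSubgroup hα (hΦ.ne_zero α (hΔ.1 hα).1)
    rw [← h, rootRefl_map] at h1
    have h2 := mul_mem (mul_mem (inv_mem hu) h1) hu
    simpa [mul_assoc] using h2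
  rw [hΦ.gen, Subgroup.closure_le]
  rintro s ⟨β, hβ, hs⟩
  rw [hs.eq_refl]
  rcases pos_or_neg hΦ ha hβ with h | h
  · exact key β h
  · rw [← rootRefl_neg]
    exact key _ h

/-! ### Words in the simple reflections -/

lemma exists_word {w : V ≃ₗᵢ[ℝ] V} (hw : w ∈ genSubgroup Δ) :
    ∃ L : List V, (∀ α ∈ L, α ∈ Δ) ∧ w = (L.map rootRefl).prod := by
  induction hw using Subgroup.closure_induction_left with
  | one => exact ⟨[], by simp, by simp⟩
  | mul_left x hx y _ ih =>
    obtain ⟨α, hα, hs⟩ := hx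
    obtain ⟨L, hL, rfl⟩ := ih
    exact ⟨α :: L, by simpa using ⟨hα, hL⟩, by simp [hs.eq_refl]⟩
  | inv_mul_cancel x hx y _ ih =>
    obtain ⟨α, hα, hs⟩ := hx
    obtain ⟨L, hL, rfl⟩ := ih
    exact ⟨α :: L, by simpa using ⟨hα, hL⟩, by simp [hs.eq_refl, rootRefl_inv]⟩

/-- The exchange property: if the word `L` sends the simple root `α` to a negative root, then
`L` followed by the reflection along `α` can be rewritten by omitting one letter of `L`. -/
lemma exists_shorter_word (hΦ : IsRootSystem W Φ) (ha : IsGeneric W a)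
    (hΔ : IsSimpleSystem (posSystem a Φ) Δ) {α : V} (hα : α ∈ Δ) (L : List V)
    (hL : ∀ γ ∈ L, γ ∈ Δ) (hneg : (L.map rootRefl).prod α ∉ posSystem a Φ) :
    ∃ L' : List V, (∀ γ ∈ L', γ ∈ Δ) ∧ L'.length < L.length ∧
      (L.map rootRefl).prod * rootRefl α = (L'.map rootRefl).prod := by
  induction L with
  | nil => exact absurd (hΔ.1 hα) (by simpa using hneg)
  | cons γ t ih =>
    simp only [List.mem_cons, forall_eq_or_imp] at hL
    by_cases ht : (t.map rootRefl).prod α ∈ posSystem a Φ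
    · refine ⟨t, hL.2, by simp, ?_⟩
      -- the reflection along `γ` makes a positive root negative, so that root is `γ`
      have hγ : (t.map rootRefl).prod α = γ := by
        by_contra hne
        exact hneg (by simpa using rootRefl_pos hΦ ha hΔ hL.1 ht hne)
      have h := rootRefl_map (t.map rootRefl).prod α
      rw [hγ] at h
      rw [List.map_cons, List.prod_cons, h]
      simp [mul_assoc, rootRefl_mul_self]
    · obtain ⟨L', hLt, hlen, h⟩ := ih hL.2 ht
      refine ⟨γ :: L', by simpa using ⟨hL.1, hLt⟩, by simpa using hlen, ?_⟩
      simp [mul_assoc, h]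

lemma word_sub_mem_cone (hΦ : IsRootSystem W Φ) (ha : IsGeneric W a)
    (hΔ : IsSimpleSystem (posSystem a Φ) Δ) (n : ℕ) : ∀ L : List V, L.length = n →
      (∀ γ ∈ L, γ ∈ Δ) → a - (L.map rootRefl).prod a ∈ PointedCone.hull ℝ Δ := by
  induction n using Nat.strong_induction_on with
  | _ n ih =>
    intro L hn hL
    rcases L.eq_nil_or_concat' with rfl | ⟨t, α, rfl⟩
    · simp
    have hα : α ∈ Δ := hL α (by simp)
    have ht : ∀ γ ∈ t, γ ∈ Δ := fun γ h => hL γ (by simp [h])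
    simp only [List.length_append, List.length_singleton] at hn
    have hprod : ((t ++ [α]).map rootRefl).prod = (t.map rootRefl).prod * rootRefl α := by simp
    by_cases hpos : (t.map rootRefl).prod α ∈ posSystem a Φ
    · have hαp := hΔ.1 hα
      have h1 := ih t.length (by omega) t rfl ht
      have hc : (0 : ℝ) ≤ 2 * ⟪a, α⟫ / ⟪α, α⟫ :=
        div_nonneg (by linarith [hαp.2]) (inner_self_pos (hΦ.ne_zero α hαp.1)).le
      have h2 := add_mem h1 (smul_mem_hull (hΔ.mem_hull hpos) hc)
      convert h2 using 1
      rw [hprod, LinearIsometryEquiv.coe_mul, Function.comp_apply, rootRefl_apply, map_sub, map_smul]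
      abel
    · obtain ⟨L', hLt, hlen, h⟩ := exists_shorter_word hΦ ha hΔ hα t ht hpos
      rw [hprod, h]
      exact ih L'.length (by omega) L' rfl hLt

/-! ### The orbit of the generic point -/

lemma sub_apply_mem_cone (hΦ : IsRootSystem W Φ) (ha : IsGeneric W a)
    (hΔ : IsSimpleSystem (posSystem a Φ) Δ) {w : V ≃ₗᵢ[ℝ] V} (hw : w ∈ W) :
    a - w a ∈ PointedCone.hull ℝ Δ := by
  rw [← genSubgroup_simple_eq hΦ ha hΔ] at hw
  obtain ⟨L, hL, rfl⟩ := exists_word hw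
  exact word_sub_mem_cone hΦ ha hΔ _ L rfl hL

lemma apply_sub_mem_span {I : Set V} {u : V ≃ₗᵢ[ℝ] V} (hu : u ∈ genSubgroup I) (x : V) :
    u x - x ∈ Submodule.span ℝ I := by
  induction hu using Subgroup.closure_induction generalizing x with
  | mem s hs =>
    obtain ⟨α, hα, hs⟩ := hs
    rw [hs.2, sub_sub_cancel_left]
    exact neg_mem (Submodule.smul_mem _ _ (Submodule.subset_span hα))
  | one => simp
  | mul u v _ _ h1 h2 =>
    have := add_mem (h1 (v x)) (h2 x)
    simpa using this
  | inv u _ h =>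
    have h1 := neg_mem (h (u⁻¹ x))
    have h2 : u (u⁻¹ x) = x := u.apply_symm_apply x
    rwa [h2, neg_sub] at h1

/-- An orbit point in `a + span I` is in the orbit of `a` under `W_I`. -/
lemma mem_orbitSet_of_sub_mem_span (hWfin : (W : Set (V ≃ₗᵢ[ℝ] V)).Finite)
    (hΦ : IsRootSystem W Φ) (ha : IsGeneric W a)
    (hΔ : IsSimpleSystem (posSystem a Φ) Δ) {I : Set V} (hI : I ⊆ Δ)
    {w : V ≃ₗᵢ[ℝ] V} (hw : w ∈ W) (hspan : a - w a ∈ Submodule.span ℝ I) :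
    w a ∈ orbitSet (genSubgroup I) a := by
  have hle : genSubgroup I ≤ W := genSubgroup_le hΦ fun α h => (hΔ.1 (hI h)).1
  obtain ⟨u, hu, hmax⟩ := Set.exists_max_image (genSubgroup I : Set (V ≃ₗᵢ[ℝ] V))
    (fun u => (⟪a, u (w a)⟫ : ℝ)) (hWfin.subset hle) ⟨1, one_mem _⟩
  obtain ⟨y, hy⟩ : ∃ y, y = u (w a) := ⟨_, rfl⟩
  have hdom : ∀ α ∈ I, (0 : ℝ) ≤ ⟪y, α⟫ := by
    intro α hα
    by_contra! hlt
    have hαp := hΔ.1 (hI hα)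
    have hα0 := hΦ.ne_zero α hαp.1
    have h2 := hmax (rootRefl α * u) (mul_mem (rootRefl_mem_genSubgroup hα hα0) hu)
    simp only [LinearIsometryEquiv.coe_mul, Function.comp_apply, ← hy] at h2
    simp only [rootRefl_apply, inner_sub_right, real_inner_smul_right] at h2
    have h3 : 2 * ⟪y, α⟫ / ⟪α, α⟫ * ⟪a, α⟫ < (0 : ℝ) :=
      mul_neg_of_neg_of_pos (div_neg_of_neg_of_pos (by linarith) (inner_self_pos hα0)) hαp.2
    linarith
  have hz : a - y ∈ PointedCone.hull ℝ I := by
    obtain ⟨f, hf0, hf⟩ := exists_supporting hΔ.2.1 I hI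
    have h1 := sub_apply_mem_cone hΦ ha hΔ (mul_mem (hle hu) hw)
    rw [LinearIsometryEquiv.coe_mul, Function.comp_apply, ← hy] at h1
    refine (hf _ h1).2 (hf0 _ ?_)
    have h2 := sub_mem hspan (apply_sub_mem_span hu (w a))
    rw [← hy] at h2
    simpa using h2
  have hnorm : ‖y‖ = ‖a‖ := by simp [hy]
  have h1 := inner_nonneg_of_mem_hull hdom hz
  have h2 := norm_add_sq_real y (a - y)
  rw [add_sub_cancel, hnorm] at h2
  have h3 : ‖a - y‖ = 0 := by
    have : ‖a - y‖ ^ 2 ≤ 0 := by linarith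
    exact pow_eq_zero_iff (two_ne_zero) |>.1 (le_antisymm this (sq_nonneg _))
  have h4 : u (w a) = a := by
    rw [← hy]
    exact (sub_eq_zero.1 (norm_eq_zero.1 h3)).symm
  exact ⟨u⁻¹, inv_mem hu, by
    conv_rhs => rw [← h4]
    exact (u.symm_apply_apply (w a)).symm⟩

end


/-- the face `F_I` is the intersection of the permutahedron with the affine
subspace through `a` directed by `span ℝ I`. -/
theorem face_eq_inter_affine_subspace [FiniteDimensional ℝ V]
    (W : Subgroup (V ≃ₗᵢ[ℝ] V)) (hWfin : (W : Set (V ≃ₗᵢ[ℝ] V)).Finite)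
    (Φ : Set V) (hΦ : IsRootSystem W Φ) (a : V) (ha : IsGeneric W a)
    (Δ : Set V) (hΔ : IsSimpleSystem (posSystem a Φ) Δ)
    (I : Set V) (hI : I ⊆ Δ) :
    permutahedron (genSubgroup I) a =
      permutahedron W a ∩ {x : V | x - a ∈ Submodule.span ℝ I} := by
  have hle : genSubgroup I ≤ W := genSubgroup_le hΦ fun α h => (hΔ.1 (hI h)).1
  apply Set.Subset.antisymm
  · refine Set.subset_inter (convexHull_mono ?_) (convexHull_min ?_ ?_)
    · rintro x ⟨u, hu, rfl⟩
      exact ⟨u, hle hu, rfl⟩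
    · rintro x ⟨u, hu, rfl⟩
      exact apply_sub_mem_span hu a
    · intro x hx y hy s t _ _ hst
      have h := add_mem (Submodule.smul_mem (Submodule.span ℝ I) s hx)
        (Submodule.smul_mem (Submodule.span ℝ I) t hy)
      have h1 : s • x + t • y - a = s • (x - a) + t • (y - a) := by
        rw [smul_sub, smul_sub, sub_add_sub_comm, ← add_smul, hst, one_smul]
      rw [Set.mem_ofPred_eq, h1]
      exact h
  · obtain ⟨f, hf0, hf⟩ := exists_supporting hΔ.2.1 I hI
    have hsub : permutahedron W a ⊆
        {x | f x ≤ f a ∧ (f x = f a → x ∈ permutahedron (genSubgroup I) a)} := by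
      refine convexHull_min ?_ ?_
      · rintro x ⟨w, hw, rfl⟩
        have h := hf _ (sub_apply_mem_cone hΦ ha hΔ hw)
        rw [map_sub] at h
        refine ⟨by linarith [h.1], fun h0 => subset_convexHull ℝ _ ?_⟩
        exact mem_orbitSet_of_sub_mem_span hWfin hΦ ha hΔ hI hw
          (PointedCone.hull_le_span (R := ℝ) _ (h.2 (by linarith)))
      · rintro x ⟨hx, hx'⟩ y ⟨hy, hy'⟩ s t hs ht hst
        simp only [Set.mem_ofPred_eq, map_add, map_smul, smul_eq_mul]
        have h1 : f a = s * f a + t * f a := by rw [← add_mul, hst, one_mul]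
        have h2 := mul_le_mul_of_nonneg_left hx hs
        have h3 := mul_le_mul_of_nonneg_left hy ht
        refine ⟨by linarith, fun h0 => ?_⟩
        rcases hs.eq_or_lt with rfl | hs'
        · have : t = 1 := by linarith
          subst this
          simpa using hy' (by linarith)
        rcases ht.eq_or_lt with rfl | ht'
        · have : s = 1 := by linarith
          subst this
          simpa using hx' (by linarith)
        exact convex_convexHull ℝ _ (hx' (mul_left_cancel₀ hs'.ne' (by linarith)))
          (hy' (mul_left_cancel₀ ht'.ne' (by linarith))) hs ht hst
    rintro x ⟨hx, hxa⟩
    have h := hf0 _ hxa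
    rw [map_sub, sub_eq_zero] at h
    exact (hsub hx).2 h
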